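/- Every subset U of ℝ that is open in the half-open (lower limit) topology contains a set V that is open in the standard topology of ℝ such that U \ V is at most countable; in particular V is dense in U for the standard topology. -/

import Mathlib

/-- The half-open (lower limit) topology on `ℝ`, generated by the intervals `[a, b)`. -/
def halfOpenTopology : TopologicalSpace ℝ :=
  TopologicalSpace.generateFrom {I : Set ℝ | ∃ a b : ℝ, I = Set.Ico a b}

theorem halfOpen_exists_Ico (U : Set ℝ) (hU : @IsOpen ℝ halfOpenTopology U) :
    ∀ x ∈ U, ∃ y, x < y ∧ Set.Ico x y ⊆ U := by
  have h : TopologicalSpace.GenerateOpen {I : Set ℝ | ∃ a b : ℝ, I = Set.Ico a b} U := hU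
  clear hU
  induction h with
  | basic s hs =>
    obtain ⟨a, b, rfl⟩ := hs
    intro x hx
    exact ⟨b, hx.2, Set.Ico_subset_Ico_left hx.1⟩
  | univ => exact fun x _ => ⟨x + 1, by linarith, Set.subset_univ _⟩
  | inter s t hs ht ihs iht =>
    intro x hx
    obtain ⟨y, hy, hys⟩ := ihs x hx.1
    obtain ⟨z, hz, hzt⟩ := iht x hx.2
    exact ⟨min y z, lt_min hy hz, fun w hw =>
      ⟨hys ⟨hw.1, hw.2.trans_le (min_le_left _ _)⟩,
       hzt ⟨hw.1, hw.2.trans_le (min_le_right _ _)⟩⟩⟩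
  | sUnion S hS ih =>
    rintro x ⟨s, hs, hx⟩
    obtain ⟨y, hy, hys⟩ := ih s hs x hx
    exact ⟨y, hy, hys.trans (Set.subset_sUnion_of_mem hs)⟩

/-- Every set `U ⊆ ℝ` open for the half-open (lower limit) topology contains a set `V`
open for the standard topology with `U \ V` at most countable; in particular `V` is dense
in `U` for the standard topology. -/
theorem halfOpen_open_contains_standard_open (U : Set ℝ) (hU : @IsOpen ℝ halfOpenTopology U) :
    ∃ V : Set ℝ, IsOpen V ∧ V ⊆ U ∧ (U \ V).Countable ∧ U ⊆ closure V := by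
  have key := halfOpen_exists_Ico U hU
  choose! y hy hyU using key
  have hV : ∀ x ∈ U, Set.Ioo x (y x) ⊆ interior U := fun x hx =>
    interior_maximal (Set.Ioo_subset_Ico_self.trans (hyU x hx)) isOpen_Ioo
  refine ⟨interior U, isOpen_interior, interior_subset, ?_, ?_⟩
  · have hlt : ∀ a ∈ U \ interior U, ∀ b ∈ U \ interior U, a < b → y a ≤ b := by
      intro a ha b hb hab
      by_contra! hc
      exact hb.2 (hV a ha.1 ⟨hab, hc⟩)
    refine Set.PairwiseDisjoint.countable_of_Ioo (y := y) ?_ (fun x hx => hy x hx.1)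
    intro a ha b hb hab
    refine Set.disjoint_left.2 fun w hwa hwb => ?_
    rcases lt_or_gt_of_ne hab with h | h
    · exact absurd (hlt a ha b hb h) (not_le.2 (hwb.1.trans hwa.2))
    · exact absurd (hlt b hb a ha h) (not_le.2 (hwa.1.trans hwb.2))
  · intro x hx
    apply closure_mono (hV x hx)
    rw [closure_Ioo (hy x hx).ne]
    exact ⟨le_rfl, (hy x hx).le⟩
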